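/- arXiv:1903.05323 — 3 statements merged into one kernel-verified Lean document; each statement's English description precedes it below -/
import Mathlib

section
/- (Trudinger–Moser inequality on finite graphs, Theorem 1.3) Let G=(V,E) be a finite graph with symmetric positive edge weights. For every p>2 and every β>1 there exists a constant C>0, depending only on p, β and G, such that for every function u:V→ℝ with ‖u‖_{W^{1,p}(V)} = (∫_V (|∇u|^p + |u|^p) dμ)^{1/p} ≤ 1, one has ∫_V exp(β|u|^{p/(p-1)}) dμ ≤ C·|V|, where |V| = ∫_V 1 dμ = Σ_{x∈V} μ(x) is the volume of G. -/
open Finset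

/-- The vertex measure `μ(x) = Σ_y ω_{xy}` of a weighted finite graph; the weight
`w x y` is `0` when `x` and `y` are not adjacent. -/
noncomputable def graphMu {V : Type*} [Fintype V] (w : V → V → ℝ) (x : V) : ℝ :=
  ∑ y, w x y

/-- The `μ`-Laplacian: `Δu(x) = (1/μ(x)) Σ_{y∼x} ω_{xy} (u(y) - u(x))`. -/
noncomputable def graphLap {V : Type*} [Fintype V] (w : V → V → ℝ) (u : V → ℝ) (x : V) : ℝ :=
  (∑ y, w x y * (u y - u x)) / graphMu w x

/-- The gradient form `Γ(u,v)(x) = (1/2)(Δ(uv)(x) - u(x)Δv(x) - v(x)Δu(x))`. -/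
noncomputable def graphGamma {V : Type*} [Fintype V] (w : V → V → ℝ) (u v : V → ℝ) (x : V) : ℝ :=
  (graphLap w (fun z => u z * v z) x - u x * graphLap w v x - v x * graphLap w u x) / 2

/-- The iterated gradient form
`Γ₂(u,v)(x) = (1/2)(ΔΓ(u,v)(x) - Γ(u,Δv)(x) - Γ(v,Δu)(x))`. -/
noncomputable def graphGamma2 {V : Type*} [Fintype V] (w : V → V → ℝ) (u v : V → ℝ) (x : V) : ℝ :=
  (graphLap w (graphGamma w u v) x - graphGamma w u (graphLap w v) x
    - graphGamma w v (graphLap w u) x) / 2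

/-- The curvature-dimension condition `CD(m, ξ)`:
`Γ₂(u,u)(x) ≥ (1/m)(Δu(x))² + ξ Γ(u,u)(x)` for all `u` and `x`. -/
def graphCD {V : Type*} [Fintype V] (w : V → V → ℝ) (m ξ : ℝ) : Prop :=
  ∀ u : V → ℝ, ∀ x : V,
    graphGamma2 w u u x ≥ (1 / m) * (graphLap w u x) ^ 2 + ξ * graphGamma w u u x

/-- Connectedness of the weighted graph: any two vertices are joined by a path of
edges of positive weight. -/
def graphConnected {V : Type*} [Fintype V] (w : V → V → ℝ) : Prop :=
  ∀ x y : V, Relation.ReflTransGen (fun a b => 0 < w a b) x y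

/-!
On a finite weighted set the `L^p` norm controls `u` at every point of positive measure, since
`μ(x)^{1/p} |u(x)| ≤ ‖u‖_p`. The `W^{1,p}` unit ball lies in the `L^p` unit ball, so it is uniformly
bounded by some `M`, and `exp(|β| M^q)` is then an admissible constant for any exponent
`q ≥ 0` in place of `p/(p-1)`.
-/

section WeightedLp

variable {V : Type*} [Fintype V] {μ : V → ℝ} {p : ℝ}

/-- The norm of `L^p(V, μ)` for a measure on a finite set given by its point masses. -/
noncomputable def weightedLpNorm (μ : V → ℝ) (p : ℝ) (u : V → ℝ) : ℝ :=
  (∑ x, μ x * |u x| ^ p) ^ (1 / p)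

theorem rpow_mul_abs_le_weightedLpNorm (hμ : ∀ x, 0 ≤ μ x) (hp : 0 < p) (u : V → ℝ) (x : V) :
    μ x ^ (1 / p) * |u x| ≤ weightedLpNorm μ p u := by
  have mass_nonneg (y : V) : 0 ≤ μ y * |u y| ^ p :=
    mul_nonneg (hμ y) (Real.rpow_nonneg (abs_nonneg _) p)
  calc
    μ x ^ (1 / p) * |u x| = μ x ^ (1 / p) * (|u x| ^ p) ^ (1 / p) := by
      rw [one_div, Real.rpow_rpow_inv (abs_nonneg _) hp.ne']
    _ = (μ x * |u x| ^ p) ^ (1 / p) :=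
      (Real.mul_rpow (hμ x) (Real.rpow_nonneg (abs_nonneg _) p)).symm
    _ ≤ weightedLpNorm μ p u :=
      Real.rpow_le_rpow (mass_nonneg x)
        (single_le_sum (fun y _ => mass_nonneg y) (mem_univ x)) (one_div_nonneg.mpr hp.le)

theorem abs_le_sum_rpow_mul_weightedLpNorm (hμ : ∀ x, 0 ≤ μ x) (hp : 0 < p) (u : V → ℝ) {x : V}
    (hx : 0 < μ x) : |u x| ≤ (∑ y, μ y ^ (-(1 / p))) * weightedLpNorm μ p u := by
  have norm_lower : μ x ^ (1 / p) * |u x| ≤ weightedLpNorm μ p u :=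
    rpow_mul_abs_le_weightedLpNorm hμ hp u x
  have norm_nonneg : 0 ≤ weightedLpNorm μ p u :=
    (mul_nonneg (Real.rpow_nonneg hx.le _) (abs_nonneg _)).trans norm_lower
  calc
    |u x| = μ x ^ (-(1 / p)) * (μ x ^ (1 / p) * |u x|) := by
      rw [← mul_assoc, ← Real.rpow_add hx, neg_add_cancel, Real.rpow_zero, one_mul]
    _ ≤ μ x ^ (-(1 / p)) * weightedLpNorm μ p u :=
      mul_le_mul_of_nonneg_left norm_lower (Real.rpow_nonneg hx.le _)
    _ ≤ (∑ y, μ y ^ (-(1 / p))) * weightedLpNorm μ p u :=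
      mul_le_mul_of_nonneg_right
        (single_le_sum (fun y _ => Real.rpow_nonneg (hμ y) (-(1 / p))) (mem_univ x)) norm_nonneg

theorem sum_mul_le_mul_sum_of_forall_pos {f : V → ℝ} {c : ℝ} (hμ : ∀ x, 0 ≤ μ x)
    (hf : ∀ x, 0 < μ x → f x ≤ c) : ∑ x, μ x * f x ≤ c * ∑ x, μ x := by
  rw [mul_comm, sum_mul]
  refine sum_le_sum fun x _ => ?_
  rcases (hμ x).eq_or_lt with hzero | hpos
  · simp only [← hzero, zero_mul, le_refl]
  · exact mul_le_mul_of_nonneg_left (hf x hpos) (hμ x)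

theorem exp_mul_abs_rpow_le {t M q : ℝ} (β : ℝ) (hq : 0 ≤ q) (ht : |t| ≤ M) :
    Real.exp (β * |t| ^ q) ≤ Real.exp (|β| * M ^ q) :=
  Real.exp_le_exp.mpr <| mul_le_mul (le_abs_self β) (Real.rpow_le_rpow (abs_nonneg t) ht hq)
    (Real.rpow_nonneg (abs_nonneg t) q) (abs_nonneg β)

theorem trudinger_moser_finite_graph_general (hμ : ∀ x, 0 ≤ μ x) (hp : 0 < p) {q : ℝ} (hq : 0 ≤ q)
    (β : ℝ) :
    ∃ C > (0 : ℝ), ∀ u : V → ℝ, weightedLpNorm μ p u ≤ 1 →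
      ∑ x, μ x * Real.exp (β * |u x| ^ q) ≤ C * ∑ x, μ x := by
  let M : ℝ := ∑ y, μ y ^ (-(1 / p))
  have M_nonneg : 0 ≤ M := sum_nonneg fun y _ => Real.rpow_nonneg (hμ y) _
  refine ⟨Real.exp (|β| * M ^ q), Real.exp_pos _, fun u hu => ?_⟩
  refine sum_mul_le_mul_sum_of_forall_pos hμ fun x hx => exp_mul_abs_rpow_le β hq ?_
  calc
    |u x| ≤ M * weightedLpNorm μ p u := abs_le_sum_rpow_mul_weightedLpNorm hμ hp u hx
    _ ≤ M := mul_le_of_le_one_right M_nonneg hu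

end WeightedLp

section Sobolev

variable {V : Type*} [Fintype V]

/-- The length `|∇u|(x)` of the gradient of `u` on a weighted graph. -/
noncomputable def graphGradLength (w : V → V → ℝ) (u : V → ℝ) (x : V) : ℝ :=
  Real.sqrt ((∑ y, w x y * (u y - u x) ^ 2) / graphMu w x)

/-- The norm of `W^{1,p}(V)` on a weighted graph. -/
noncomputable def graphSobolevNorm (w : V → V → ℝ) (p : ℝ) (u : V → ℝ) : ℝ :=
  (∑ x, graphMu w x * (graphGradLength w u x ^ p + |u x| ^ p)) ^ (1 / p)

theorem weightedLpNorm_le_graphSobolevNorm {w : V → V → ℝ} (hmu : ∀ x, 0 ≤ graphMu w x) {p : ℝ}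
    (hp : 0 ≤ p) (u : V → ℝ) : weightedLpNorm (graphMu w) p u ≤ graphSobolevNorm w p u := by
  refine Real.rpow_le_rpow
    (sum_nonneg fun x _ => mul_nonneg (hmu x) (Real.rpow_nonneg (abs_nonneg _) p))
    (sum_le_sum fun x _ => mul_le_mul_of_nonneg_left ?_ (hmu x)) (one_div_nonneg.mpr hp)
  exact le_add_of_nonneg_left (Real.rpow_nonneg (Real.sqrt_nonneg _) p)

end Sobolev

/-- **Trudinger–Moser inequality on finite graphs** (Theorem 1.3).
For every `p > 2` and `β > 1` there is a constant `C > 0`, depending only on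
`p`, `β` and the graph, such that every `u : V → ℝ` with
`‖u‖_{W^{1,p}} = (∫_V (|∇u|^p + |u|^p) dμ)^{1/p} ≤ 1` satisfies
`∫_V exp(β |u|^{p/(p-1)}) dμ ≤ C |V|`. -/
theorem trudinger_moser_finite_graph
    {V : Type*} [Fintype V] [Nonempty V] (w : V → V → ℝ)
    (hsymm : ∀ x y, w x y = w y x) (hnn : ∀ x y, 0 ≤ w x y)
    (hmu : ∀ x, 0 < graphMu w x)
    (p β : ℝ) (hp : 2 < p) (hβ : 1 < β) :
    ∃ C > (0 : ℝ), ∀ u : V → ℝ,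
      (∑ x, graphMu w x *
          ((Real.sqrt ((∑ y, w x y * (u y - u x) ^ 2) / graphMu w x)) ^ p
            + |u x| ^ p)) ^ (1 / p) ≤ 1 →
      ∑ x, graphMu w x * Real.exp (β * |u x| ^ (p / (p - 1)))
        ≤ C * ∑ x, graphMu w x := by
  obtain ⟨C, hC, hbound⟩ := trudinger_moser_finite_graph_general (fun x => (hmu x).le)
    (by linarith : 0 < p) (div_nonneg (by linarith) (by linarith) : 0 ≤ p / (p - 1)) β
  exact ⟨C, hC, fun u hu => hbound u <|
    (weightedLpNorm_le_graphSobolevNorm (fun x => (hmu x).le) (by linarith) u).trans hu⟩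
end

section
/- (Theorem 1.4) Let G=(V,E) be a finite connected graph whose μ-Laplacian Δ satisfies the curvature-dimension inequality CD(m,ξ) for some m>1 and ξ>0. Suppose u:V→ℝ is an eigenfunction of −Δ with nonzero eigenvalue λ, i.e. −Δu(x)=λu(x) for all x∈V, u not identically zero, λ≠0. Then λ>ξ and (2λ²/(m(λ−ξ))) ∫_V u² dμ ≤ ∫_V |∇u|² dμ. -/
open Finset

/-!
Summation by parts gives `∫ Γ(u,v) dμ = -∫ u Δv dμ`. Integrating the definition of `Γ₂` kills the
term `ΔΓ(u,v)` and leaves `∫ Γ₂(u,v) dμ = ∫ Δu Δv dμ`, so `CD(m, ξ)` integrates to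
`(1/m) ∫ (Δu)² dμ + ξ ∫ Γ(u,u) dμ ≤ ∫ (Δu)² dμ`. For `-Δu = λu` the three integrals are
`λ² ∫ u² dμ`, `λ ∫ u² dμ` and `λ² ∫ u² dμ`. Here `λ > 0` because `Γ(u,u) ≥ 0`, so dividing by
`λ ∫ u² dμ` gives the Lichnerowicz bound `λ/m + ξ ≤ λ`. As `∫ |∇u|² dμ = 2λ ∫ u² dμ`, the integral
inequality is this bound rearranged.
-/

section GraphLaplacian

variable {V : Type*} [Fintype V] {w : V → V → ℝ}

theorem graphMu_mul_graphLap {x : V} (hx : graphMu w x ≠ 0) (u : V → ℝ) :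
    graphMu w x * graphLap w u x = ∑ y, w x y * (u y - u x) :=
  mul_div_cancel₀ _ hx

theorem graphGamma_eq_sum_div (w : V → V → ℝ) (u v : V → ℝ) (x : V) :
    graphGamma w u v x =
      (∑ y, w x y * ((u y - u x) * (v y - v x))) / (2 * graphMu w x) := by
  have expand : ∑ y, w x y * ((u y - u x) * (v y - v x)) =
      ∑ y, w x y * (u y * v y - u x * v x) - u x * ∑ y, w x y * (v y - v x)
        - v x * ∑ y, w x y * (u y - u x) := by
    simp only [mul_sum, ← sum_sub_distrib]
    exact sum_congr rfl fun y _ => by ring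
  rw [expand, graphGamma, graphLap, graphLap, graphLap]
  ring

theorem graphGamma_self_nonneg {x : V} (hw : ∀ y, 0 ≤ w x y) (u : V → ℝ) :
    0 ≤ graphGamma w u u x := by
  rw [graphGamma_eq_sum_div]
  have hmu : 0 ≤ graphMu w x := sum_nonneg fun y _ => hw y
  exact div_nonneg (sum_nonneg fun y _ => mul_nonneg (hw y) (mul_self_nonneg _)) (by positivity)

theorem sum_graphMu_mul_sq_pos (hmu : ∀ x, 0 < graphMu w x) {u : V → ℝ} (hu : u ≠ 0) :
    0 < ∑ x, graphMu w x * u x ^ 2 := by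
  obtain ⟨a, ha⟩ := Function.ne_iff.mp hu
  exact sum_pos' (fun x _ => mul_nonneg (hmu x).le (sq_nonneg _))
    ⟨a, mem_univ a, mul_pos (hmu a) (sq_pos_of_ne_zero ha)⟩

theorem sum_graphMu_mul_mul_graphLap_comm (hsymm : ∀ x y, w x y = w y x)
    (hmu : ∀ x, graphMu w x ≠ 0) (u v : V → ℝ) :
    ∑ x, graphMu w x * (u x * graphLap w v x) = ∑ x, graphMu w x * (v x * graphLap w u x) := by
  have toEdges (f g : V → ℝ) : ∑ x, graphMu w x * (f x * graphLap w g x) =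
      ∑ x, ∑ y, w x y * (f x * g y) - ∑ x, ∑ y, w x y * (f x * g x) := by
    simp only [mul_left_comm (graphMu w _), graphMu_mul_graphLap (hmu _), mul_sum,
      ← sum_sub_distrib]
    exact sum_congr rfl fun x _ => sum_congr rfl fun y _ => by ring
  have swap : ∑ x, ∑ y, w x y * (u x * v y) = ∑ x, ∑ y, w x y * (v x * u y) := by
    rw [sum_comm]
    exact sum_congr rfl fun x _ => sum_congr rfl fun y _ => by rw [hsymm, mul_comm (u y)]
  rw [toEdges, toEdges, swap]
  simp only [mul_comm (u _) (v _)]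

theorem sum_graphMu_mul_graphLap_eq_zero (hsymm : ∀ x y, w x y = w y x)
    (hmu : ∀ x, graphMu w x ≠ 0) (u : V → ℝ) :
    ∑ x, graphMu w x * graphLap w u x = 0 := by
  simpa [graphLap] using sum_graphMu_mul_mul_graphLap_comm hsymm hmu 1 u

theorem sum_graphMu_mul_graphGamma (hsymm : ∀ x y, w x y = w y x)
    (hmu : ∀ x, graphMu w x ≠ 0) (u v : V → ℝ) :
    ∑ x, graphMu w x * graphGamma w u v x = -∑ x, graphMu w x * (u x * graphLap w v x) := by
  have hdiv := sum_graphMu_mul_graphLap_eq_zero hsymm hmu fun x => u x * v x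
  have hcomm := sum_graphMu_mul_mul_graphLap_comm hsymm hmu u v
  simp only [graphGamma, mul_div_assoc', ← sum_div, mul_sub, sum_sub_distrib]
  linarith

theorem sum_graphMu_mul_graphGamma2 (hsymm : ∀ x y, w x y = w y x)
    (hmu : ∀ x, graphMu w x ≠ 0) (u v : V → ℝ) :
    ∑ x, graphMu w x * graphGamma2 w u v x =
      ∑ x, graphMu w x * (graphLap w u x * graphLap w v x) := by
  have hdiv := sum_graphMu_mul_graphLap_eq_zero hsymm hmu (graphGamma w u v)
  have hgreen_u := sum_graphMu_mul_graphGamma hsymm hmu u (graphLap w v)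
  have hgreen_v := sum_graphMu_mul_graphGamma hsymm hmu v (graphLap w u)
  have hcomm_u := sum_graphMu_mul_mul_graphLap_comm hsymm hmu u (graphLap w v)
  have hcomm_v := sum_graphMu_mul_mul_graphLap_comm hsymm hmu v (graphLap w u)
  simp only [mul_comm (graphLap w v _)] at hcomm_u
  simp only [graphGamma2, mul_div_assoc', ← sum_div, mul_sub, sum_sub_distrib]
  linarith

theorem graphCD.sum_graphLap_sq_add_sum_graphGamma_le {m ξ : ℝ} (hCD : graphCD w m ξ)
    (hsymm : ∀ x y, w x y = w y x) (hmu : ∀ x, 0 < graphMu w x) (u : V → ℝ) :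
    1 / m * ∑ x, graphMu w x * graphLap w u x ^ 2 + ξ * ∑ x, graphMu w x * graphGamma w u u x ≤
      ∑ x, graphMu w x * graphLap w u x ^ 2 :=
  calc
    _ = ∑ x, graphMu w x * (1 / m * graphLap w u x ^ 2 + ξ * graphGamma w u u x) := by
      simp only [mul_sum, ← sum_add_distrib, mul_add, mul_left_comm (graphMu w _)]
    _ ≤ ∑ x, graphMu w x * graphGamma2 w u u x :=
      sum_le_sum fun x _ => mul_le_mul_of_nonneg_left (hCD u x) (hmu x).le
    _ = _ := by
      simp only [sum_graphMu_mul_graphGamma2 hsymm fun x => (hmu x).ne', sq]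

section Eigenfunction

variable {lam : ℝ} {u : V → ℝ}

theorem sum_graphMu_mul_graphGamma_self_of_eigenfunction (hsymm : ∀ x y, w x y = w y x)
    (hmu : ∀ x, graphMu w x ≠ 0) (heig : ∀ x, -graphLap w u x = lam * u x) :
    ∑ x, graphMu w x * graphGamma w u u x = lam * ∑ x, graphMu w x * u x ^ 2 := by
  rw [sum_graphMu_mul_graphGamma hsymm hmu, ← sum_neg_distrib, mul_sum]
  exact sum_congr rfl fun x _ => by linear_combination graphMu w x * u x * heig x

theorem sum_graphMu_mul_graphLap_sq_of_eigenfunction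
    (heig : ∀ x, -graphLap w u x = lam * u x) :
    ∑ x, graphMu w x * graphLap w u x ^ 2 = lam ^ 2 * ∑ x, graphMu w x * u x ^ 2 := by
  rw [mul_sum]
  exact sum_congr rfl fun x _ => by rw [← neg_sq, heig]; ring

theorem graphLap_eigenvalue_pos (hsymm : ∀ x y, w x y = w y x) (hnn : ∀ x y, 0 ≤ w x y)
    (hmu : ∀ x, 0 < graphMu w x) (hu : u ≠ 0) (hlam : lam ≠ 0)
    (heig : ∀ x, -graphLap w u x = lam * u x) : 0 < lam := by
  have henergy : 0 ≤ lam * ∑ x, graphMu w x * u x ^ 2 := by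
    rw [← sum_graphMu_mul_graphGamma_self_of_eigenfunction hsymm (fun x => (hmu x).ne') heig]
    exact sum_nonneg fun x _ => mul_nonneg (hmu x).le (graphGamma_self_nonneg (hnn x) u)
  exact (nonneg_of_mul_nonneg_left henergy (sum_graphMu_mul_sq_pos hmu hu)).lt_of_ne' hlam

theorem graphCD.eigenvalue_div_add_le {m ξ : ℝ} (hCD : graphCD w m ξ)
    (hsymm : ∀ x y, w x y = w y x) (hmu : ∀ x, 0 < graphMu w x) (hu : u ≠ 0) (hlam : 0 < lam)
    (heig : ∀ x, -graphLap w u x = lam * u x) : lam / m + ξ ≤ lam := by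
  have hCD_int := hCD.sum_graphLap_sq_add_sum_graphGamma_le hsymm hmu u
  rw [sum_graphMu_mul_graphLap_sq_of_eigenfunction heig,
    sum_graphMu_mul_graphGamma_self_of_eigenfunction hsymm (fun x => (hmu x).ne') heig] at hCD_int
  refine le_of_mul_le_mul_right ?_ (mul_pos hlam (sum_graphMu_mul_sq_pos hmu hu))
  linear_combination hCD_int

end Eigenfunction

end GraphLaplacian

theorem integral_inequality_CD_general
    {V : Type*} [Fintype V] (w : V → V → ℝ)
    (hsymm : ∀ x y, w x y = w y x) (hnn : ∀ x y, 0 ≤ w x y) (hmu : ∀ x, 0 < graphMu w x)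
    (m ξ lam : ℝ) (hm : 0 < m) (hCD : graphCD w m ξ)
    (u : V → ℝ) (hu : u ≠ 0) (hlam : lam ≠ 0)
    (heig : ∀ x, -graphLap w u x = lam * u x) :
    ξ < lam ∧
      (2 * lam ^ 2 / (m * (lam - ξ))) * ∑ x, graphMu w x * (u x) ^ 2
        ≤ ∑ x, graphMu w x * (2 * graphGamma w u u x) := by
  have hpos : 0 < lam := graphLap_eigenvalue_pos hsymm hnn hmu hu hlam heig
  have hbound : lam / m + ξ ≤ lam := hCD.eigenvalue_div_add_le hsymm hmu hu hpos heig
  have hgap : ξ < lam := by linarith [div_pos hpos hm]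
  have hcoeff : 2 * lam ^ 2 / (m * (lam - ξ)) ≤ 2 * lam := by
    have hle : lam ≤ (lam - ξ) * m := (div_le_iff₀ hm).mp (by linarith)
    rw [div_le_iff₀ (mul_pos hm (sub_pos.mpr hgap))]
    linear_combination 2 * lam * hle
  refine ⟨hgap, ?_⟩
  calc
    _ ≤ 2 * lam * ∑ x, graphMu w x * u x ^ 2 :=
      mul_le_mul_of_nonneg_right hcoeff (sum_graphMu_mul_sq_pos hmu hu).le
    _ = 2 * ∑ x, graphMu w x * graphGamma w u u x := by
      rw [sum_graphMu_mul_graphGamma_self_of_eigenfunction hsymm (fun x => (hmu x).ne') heig,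
        mul_assoc]
    _ = _ := by simp only [mul_sum, mul_left_comm (2 : ℝ)]

/-- **Theorem 1.4.** If the μ-Laplacian of a finite connected graph satisfies
`CD(m, ξ)` with `m > 1`, `ξ > 0`, and `u` is an eigenfunction of `-Δ` with
nonzero eigenvalue `λ`, then `λ > ξ` and
`(2λ²/(m(λ-ξ))) ∫_V u² dμ ≤ ∫_V |∇u|² dμ`, where `|∇u|² = 2Γ(u,u)`. -/
theorem integral_inequality_CD
    {V : Type*} [Fintype V] [Nonempty V] (w : V → V → ℝ)
    (hsymm : ∀ x y, w x y = w y x) (hnn : ∀ x y, 0 ≤ w x y)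
    (hmu : ∀ x, 0 < graphMu w x) (hconn : graphConnected w)
    (m ξ lam : ℝ) (hm : 1 < m) (hξ : 0 < ξ) (hCD : graphCD w m ξ)
    (u : V → ℝ) (hu : u ≠ 0) (hlam : lam ≠ 0)
    (heig : ∀ x, -graphLap w u x = lam * u x) :
    ξ < lam ∧
      (2 * lam ^ 2 / (m * (lam - ξ))) * ∑ x, graphMu w x * (u x) ^ 2
        ≤ ∑ x, graphMu w x * (2 * graphGamma w u u x) :=
  integral_inequality_CD_general w hsymm hnn hmu m ξ lam (one_pos.trans hm) hCD u hu hlam heig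
end

section
/- (Lin–Yau curvature bound, cited as proved in [YLS]) Let G=(V,E) be a finite connected graph with symmetric positive edge weights, and set d = max_{x∈V} max_{y∼x} μ(x)/ω_{xy} (which is finite and ≥ 1). Then the μ-Laplacian Δ of G satisfies the curvature-dimension inequality CD(2, 2/d − 1), i.e. Γ₂(u,u)(x) ≥ (1/2)(Δu(x))² + (2/d − 1)Γ(u,u)(x) for every u:V→ℝ and x∈V. -/
open Finset

/-!
Let `p(x, y) = ω_{xy} / μ(x)` be the transition probabilities of the random walk on the graph.
Expanding the definitions gives the Bochner-type identity
`2 Γ₂(u,u)(x) + Γ(u,u)(x) - (Δu(x))² = ∑_y p(x, y) (Γ(u,u)(y) - (u(y) - u(x)) Δu(y))`.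
Completing the square turns the bracket into
`½ ∑_z p(y, z) (u(z) - 2u(y) + u(x))² - ½ (u(y) - u(x))²`.
The term `z = x` alone, a step of the walk back from `y` to `x`, contributes
`2 p(y, x) (u(y) - u(x))²`, and `p(y, x) ≥ 1/d` whenever `x` and `y` are adjacent.
-/

/-- The probability `p(x, y) = ω_{xy} / μ(x)` that the random walk on the weighted graph steps
from `x` to `y`; every operator of the calculus is an average against it. All `p(x, y)` are `0`
when `μ(x) = 0`. -/
noncomputable def graphTransition {V : Type*} [Fintype V] (w : V → V → ℝ) (x y : V) : ℝ :=
  w x y / graphMu w x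

section

variable {V : Type*} [Fintype V] {w : V → V → ℝ} {x y : V}

theorem graphTransition_nonneg (hnn : ∀ y, 0 ≤ w x y) (y : V) : 0 ≤ graphTransition w x y :=
  div_nonneg (hnn y) (sum_nonneg fun z _ => hnn z)

theorem sum_graphTransition (hmu : graphMu w x ≠ 0) : ∑ y, graphTransition w x y = 1 := by
  simp only [graphTransition, ← sum_div]
  exact div_self hmu

theorem sum_graphTransition_mul_const (hmu : graphMu w x ≠ 0) (c : ℝ) :
    ∑ y, graphTransition w x y * c = c := by
  rw [← sum_mul, sum_graphTransition hmu, one_mul]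

theorem inv_le_graphTransition {d : ℝ} (hmu : 0 < graphMu w x) (hxy : 0 < w x y)
    (hd : graphMu w x / w x y ≤ d) : d⁻¹ ≤ graphTransition w x y := by
  simpa only [graphTransition, inv_div] using inv_anti₀ (div_pos hmu hxy) hd

theorem graphLap_eq_sum (u : V → ℝ) (x : V) :
    graphLap w u x = ∑ y, graphTransition w x y * (u y - u x) := by
  simp only [graphLap, graphTransition, sum_div, div_mul_eq_mul_div]

theorem graphGamma_eq_sum (u v : V → ℝ) (x : V) :
    graphGamma w u v x = ∑ y, graphTransition w x y * ((u y - u x) * (v y - v x) / 2) := by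
  simp only [graphGamma, graphLap_eq_sum, mul_sum, ← sum_sub_distrib, sum_div]
  exact sum_congr rfl fun y _ => by ring

theorem two_mul_graphGamma2_self_eq_sum (u : V → ℝ) (x : V) :
    2 * graphGamma2 w u u x = ∑ y, graphTransition w x y *
      (graphGamma w u u y - graphGamma w u u x
        - (u y - u x) * (graphLap w u y - graphLap w u x)) := by
  calc 2 * graphGamma2 w u u x
      = graphLap w (graphGamma w u u) x - 2 * graphGamma w u (graphLap w u) x := by
        rw [graphGamma2]; ring
    _ = _ := by
        rw [graphLap_eq_sum, graphGamma_eq_sum u (graphLap w u), mul_sum, ← sum_sub_distrib]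
        exact sum_congr rfl fun y _ => by ring

theorem graphGamma2_self_add_graphGamma_sub_sq_graphLap (hmu : graphMu w x ≠ 0) (u : V → ℝ) :
    2 * graphGamma2 w u u x + graphGamma w u u x - graphLap w u x ^ 2 =
      ∑ y, graphTransition w x y * (graphGamma w u u y - (u y - u x) * graphLap w u y) := by
  have gamma_avg := sum_graphTransition_mul_const hmu (graphGamma w u u x)
  have lap_sq : ∑ y, graphTransition w x y * (u y - u x) * graphLap w u x =
      graphLap w u x ^ 2 := by
    rw [← sum_mul, ← graphLap_eq_sum, sq]
  rw [two_mul_graphGamma2_self_eq_sum, ← lap_sq]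
  nth_rewrite 2 [← gamma_avg]
  rw [← sum_add_distrib, ← sum_sub_distrib]
  exact sum_congr rfl fun y _ => by ring

theorem graphGamma_sub_mul_graphLap_add_sq (hmu : graphMu w x ≠ 0) (u : V → ℝ) (a : ℝ) :
    graphGamma w u u x - (u x - a) * graphLap w u x + (u x - a) ^ 2 / 2 =
      ∑ y, graphTransition w x y * ((u y - 2 * u x + a) ^ 2 / 2) := by
  rw [graphGamma_eq_sum, graphLap_eq_sum, mul_sum,
    ← sum_graphTransition_mul_const hmu ((u x - a) ^ 2 / 2), ← sum_sub_distrib, ← sum_add_distrib]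
  exact sum_congr rfl fun y _ => by ring

theorem two_mul_graphTransition_mul_sq_le (hnn : ∀ z, 0 ≤ w y z) (hmu : graphMu w y ≠ 0)
    (u : V → ℝ) (x : V) :
    2 * graphTransition w y x * (u y - u x) ^ 2 ≤
      graphGamma w u u y - (u y - u x) * graphLap w u y + (u y - u x) ^ 2 / 2 := by
  calc 2 * graphTransition w y x * (u y - u x) ^ 2
      = graphTransition w y x * ((u x - 2 * u y + u x) ^ 2 / 2) := by ring
    _ ≤ ∑ z, graphTransition w y z * ((u z - 2 * u y + u x) ^ 2 / 2) :=
        single_le_sum (f := fun z => graphTransition w y z * ((u z - 2 * u y + u x) ^ 2 / 2))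
          (fun z _ => mul_nonneg (graphTransition_nonneg hnn z) (by positivity)) (mem_univ x)
    _ = _ := (graphGamma_sub_mul_graphLap_add_sq hmu u (u x)).symm

theorem mul_graphGamma_le_sum (hnn : ∀ x y, 0 ≤ w x y) (hmu : ∀ x, graphMu w x ≠ 0) {κ : ℝ}
    (hκ : ∀ y, 0 < w x y → κ ≤ graphTransition w y x) (u : V → ℝ) :
    (4 * κ - 1) * graphGamma w u u x ≤
      ∑ y, graphTransition w x y * (graphGamma w u u y - (u y - u x) * graphLap w u y) := by
  rw [graphGamma_eq_sum, mul_sum]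
  refine sum_le_sum fun y _ => ?_
  rcases (hnn x y).eq_or_lt with not_adj | adj
  · simp [graphTransition, ← not_adj]
  · have return_le : 2 * κ * (u y - u x) ^ 2 ≤ 2 * graphTransition w y x * (u y - u x) ^ 2 := by
      gcongr
      exact hκ y adj
    calc (4 * κ - 1) * (graphTransition w x y * ((u y - u x) * (u y - u x) / 2))
        = graphTransition w x y * (2 * κ * (u y - u x) ^ 2 - (u y - u x) ^ 2 / 2) := by ring
      _ ≤ _ := mul_le_mul_of_nonneg_left
          (by linarith [two_mul_graphTransition_mul_sq_le (hnn y) (hmu y) u x])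
          (graphTransition_nonneg (hnn x) y)

end

theorem lin_yau_curvature_bound_general {V : Type*} [Fintype V] {w : V → V → ℝ}
    (hnn : ∀ x y, 0 ≤ w x y) (hmu : ∀ x, graphMu w x ≠ 0) {κ : ℝ}
    (hκ : ∀ x y, 0 < w x y → κ ≤ graphTransition w y x) :
    graphCD w 2 (2 * κ - 1) := by
  intro u x
  have bochner := graphGamma2_self_add_graphGamma_sub_sq_graphLap (hmu x) u
  have lower_bound := mul_graphGamma_le_sum hnn hmu (hκ x) u
  linarith

/-- **Lin–Yau curvature bound.** Let `d = max_{x∈V} max_{y∼x} μ(x)/ω_{xy}`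
(the maximum of the set `{μ(x)/ω_{xy} : x ∼ y}`). Then the μ-Laplacian
satisfies `CD(2, 2/d - 1)`. -/
theorem lin_yau_curvature_bound
    {V : Type*} [Fintype V] [Nonempty V] (w : V → V → ℝ)
    (hsymm : ∀ x y, w x y = w y x) (hnn : ∀ x y, 0 ≤ w x y)
    (hmu : ∀ x, 0 < graphMu w x) (hconn : graphConnected w)
    (d : ℝ)
    (hd : IsGreatest {r : ℝ | ∃ x y, 0 < w x y ∧ r = graphMu w x / w x y} d) :
    graphCD w 2 (2 / d - 1) := by
  rw [div_eq_mul_inv]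
  exact lin_yau_curvature_bound_general hnn (fun x => (hmu x).ne') fun x y hxy =>
    inv_le_graphTransition (hmu y) (hsymm x y ▸ hxy) (hd.2 ⟨y, x, hsymm x y ▸ hxy, rfl⟩)
end
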